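/- Let n ≥ 1, R > 0, let V : ℝⁿ → ℝ be a bounded measurable real-valued function, let λ ∈ ℂ with Im λ ≠ 0, and let f : ℝⁿ → ℂ be continuous. Suppose u, w : ℝⁿ → ℂ are smooth, satisfy Δ²u + V·u − λ·u = f and Δ²w + V·w − λ·w = u at every point of the closed ball of radius R centered at the origin, and satisfy u(x) = Δu(x) = w(x) = Δw(x) = 0 for every x ∈ ∂B_R. Then (∫_{B_R} |w|² dx)^{1/2} ≤ (1/|Im λ|²)·(∫_{B_R} |f|² dx)^{1/2}. -/

import Mathlib

open MeasureTheory Metric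

/-- The Laplacian of a complex-valued function on `EuclideanSpace ℝ (Fin n)`:
the trace of the second Fréchet derivative. -/
noncomputable def lapC (n : ℕ) (f : EuclideanSpace ℝ (Fin n) → ℂ) (x : EuclideanSpace ℝ (Fin n)) : ℂ :=
  ∑ i : Fin n, fderiv ℝ (fderiv ℝ f) x (EuclideanSpace.single i 1) (EuclideanSpace.single i 1)

/-
For `g` vanishing on the boundary, the zero extension of `g` is Lipschitz, so its directional
derivatives integrate to zero; integrating by parts twice, the bilaplacian with Navier boundary
conditions is symmetric and `∫ ⟪u, Δ²u⟫` is real. As `V` is real, the imaginary part of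
`∫ ⟪u, f + λu⟫ = ∫ ⟪u, Δ²u + Vu⟫` vanishes, that is `Im λ ‖u‖² = -Im ⟪u, f⟫` in `L²`, and
Cauchy–Schwarz gives `|Im λ| ‖u‖ ≤ ‖f‖`. Applying this to `u` and then to `w` squares the constant.
-/

open Bornology Filter Topology InnerProductSpace Laplacian Set

section ZeroExtension

theorem inter_frontier_nonempty_of_isPreconnected {X : Type*} [TopologicalSpace X] {s t : Set X}
    (ht : IsPreconnected t) (hs : (t ∩ s).Nonempty) (hs' : (t ∩ sᶜ).Nonempty) :
    (t ∩ frontier s).Nonempty := by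
  have : PreconnectedSpace t := isPreconnected_iff_preconnectedSpace.1 ht
  obtain ⟨⟨x, hxt, hxs⟩, ⟨y, hyt, hys⟩⟩ := And.intro hs hs'
  have hpre : (frontier ((↑) ⁻¹' s : Set t)).Nonempty :=
    nonempty_frontier_iff.2 ⟨⟨⟨x, hxt⟩, hxs⟩, fun h => hys (h.ge (mem_univ ⟨y, hyt⟩))⟩
  obtain ⟨z, hz⟩ := hpre
  exact ⟨z, z.2, continuous_subtype_val.frontier_preimage_subset s hz⟩

variable {E F : Type*} [NormedAddCommGroup E] [NormedSpace ℝ E] [NormedAddCommGroup F]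
  {Ω : Set E} {φ : E → F}

theorem lipschitzWith_indicator_of_eq_zero_on_frontier {K : NNReal}
    (hφ : LipschitzOnWith K φ (closure Ω)) (hφ₀ : ∀ x ∈ frontier Ω, φ x = 0) :
    LipschitzWith K (Ω.indicator φ) := by
  have norm_le_of_mem_of_notMem : ∀ x ∈ Ω, ∀ y ∉ Ω, ‖φ x‖ ≤ K * dist x y := by
    intro x hx y hy
    obtain ⟨z, hz, hzΩ⟩ := inter_frontier_nonempty_of_isPreconnected
      (convex_segment (𝕜 := ℝ) x y).isPreconnected
      ⟨x, left_mem_segment ℝ x y, hx⟩ ⟨y, right_mem_segment ℝ x y, hy⟩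
    calc ‖φ x‖ = dist (φ x) (φ z) := by rw [hφ₀ z hzΩ, dist_zero_right]
      _ ≤ K * dist x z := hφ.dist_le_mul x (subset_closure hx) z (frontier_subset_closure hzΩ)
      _ ≤ K * dist x y := by
        gcongr
        exact (le_add_of_nonneg_right dist_nonneg).trans_eq (dist_add_dist_of_mem_segment hz)
  refine LipschitzWith.of_dist_le_mul fun x y => ?_
  by_cases hx : x ∈ Ω <;> by_cases hy : y ∈ Ω
  · simpa only [indicator_of_mem, hx, hy] using
      hφ.dist_le_mul x (subset_closure hx) y (subset_closure hy)
  · simpa only [indicator_of_mem hx, indicator_of_notMem hy, dist_zero_right] using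
      norm_le_of_mem_of_notMem x hx y hy
  · simpa only [indicator_of_mem hy, indicator_of_notMem hx, dist_zero_left, dist_comm x y] using
      norm_le_of_mem_of_notMem y hy x hx
  · simpa only [indicator_of_notMem, hx, hy, not_false_eq_true, dist_self] using by positivity

variable [NormedSpace ℝ F]

theorem lineDeriv_indicator_of_notMem_frontier {x : E} (hx : x ∉ frontier Ω) (v : E) :
    lineDeriv ℝ (Ω.indicator φ) x v = Ω.indicator (fun y => lineDeriv ℝ φ y v) x := by
  by_cases hxΩ : x ∈ Ω
  · have hnhds : Ω ∈ 𝓝 x := by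
      by_contra h
      exact hx ⟨subset_closure hxΩ, fun h' => h (mem_interior_iff_mem_nhds.1 h')⟩
    rw [indicator_of_mem hxΩ]
    exact (eqOn_indicator.eventuallyEq_of_mem hnhds).lineDeriv_eq
  · have hnhds : Ωᶜ ∈ 𝓝 x := by
      by_contra h
      rw [← frontier_compl] at hx
      exact hx ⟨subset_closure hxΩ, fun h' => h (mem_interior_iff_mem_nhds.1 h')⟩
    have hzero : Ω.indicator φ =ᶠ[𝓝 x] fun _ => 0 :=
      eventually_of_mem hnhds fun y hy => indicator_of_notMem hy φ
    rw [indicator_of_notMem hxΩ, hzero.lineDeriv_eq]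
    simp only [lineDeriv, deriv_const]

end ZeroExtension

section Integrability

variable {X F : Type*} [PseudoMetricSpace X] [ProperSpace X] [MeasurableSpace X]
  [OpensMeasurableSpace X] {μ : Measure X} [IsFiniteMeasureOnCompacts μ]
  [NormedAddCommGroup F] {Ω : Set X}

theorem memLp_restrict_of_continuous {g : X → F} (hg : Continuous g) (hΩ : IsBounded Ω)
    (p : ENNReal) : MemLp g p (μ.restrict Ω) := by
  have hK : IsCompact (closure Ω) := hΩ.isCompact_closure
  have : IsFiniteMeasure (μ.restrict (closure Ω)) := ⟨by simpa using hK.measure_lt_top⟩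
  obtain ⟨C, hC⟩ := hK.exists_bound_of_continuousOn hg.continuousOn
  exact (MemLp.of_bound hg.aestronglyMeasurable C
    (ae_restrict_of_forall_mem isClosed_closure.measurableSet hC)).mono_measure
    (Measure.restrict_mono_set μ subset_closure)

theorem integrableOn_of_continuous {g : X → F} (hg : Continuous g) (hΩ : IsBounded Ω) :
    IntegrableOn g Ω μ :=
  memLp_one_iff_integrable.1 (memLp_restrict_of_continuous hg hΩ 1)

end Integrability

section BoundedDomain

variable {E F G H : Type*} [NormedAddCommGroup E] [NormedSpace ℝ E] [FiniteDimensional ℝ E]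
  [MeasurableSpace E] [BorelSpace E] {μ : Measure E} [μ.IsAddHaarMeasure]
  [NormedAddCommGroup F] [NormedAddCommGroup G] [NormedAddCommGroup H] {Ω : Set E}

theorem integral_lineDeriv_eq_zero {K : NNReal} {g : E → ℝ} (hg : LipschitzWith K g)
    (hg' : HasCompactSupport g) (v : E) : ∫ x, lineDeriv ℝ g x v ∂μ = 0 := by
  have h := LipschitzWith.integral_lineDeriv_mul_eq (μ := μ)
    (LipschitzWith.const (α := E) (1 : ℝ)) hg hg' (-v)
  simpa [lineDeriv] using h.symm

variable [NormedSpace ℝ F] [NormedSpace ℝ G] [NormedSpace ℝ H]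

theorem setIntegral_fderiv_real_eq_zero_of_eq_zero_on_frontier (hΩ : IsBounded Ω)
    (hΩ' : μ (frontier Ω) = 0) {φ : E → ℝ} (hφ : ContDiff ℝ 1 φ)
    (hφ₀ : ∀ x ∈ frontier Ω, φ x = 0) (v : E) : ∫ x in Ω, fderiv ℝ φ x v ∂μ = 0 := by
  obtain ⟨r, hr⟩ := hΩ.subset_closedBall (0 : E)
  obtain ⟨K, hK⟩ := (hφ.contDiffOn (s := closedBall 0 r)).exists_lipschitzOnWith one_ne_zero
    (convex_closedBall 0 r) (isCompact_closedBall 0 r)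
  have hlip : LipschitzWith K (Ω.indicator φ) := lipschitzWith_indicator_of_eq_zero_on_frontier
    (hK.mono (closure_minimal hr isClosed_closedBall)) hφ₀
  have hsupp : HasCompactSupport (Ω.indicator φ) :=
    .of_support_subset_isCompact (isCompact_closedBall 0 r) (support_indicator_subset.trans hr)
  rw [← integral_indicator₀ (nullMeasurableSet_of_null_frontier hΩ'),
    ← integral_lineDeriv_eq_zero (μ := μ) hlip hsupp v]
  refine integral_congr_ae ?_
  filter_upwards [measure_eq_zero_iff_ae_notMem.1 hΩ'] with x hx
  rw [lineDeriv_indicator_of_notMem_frontier hx]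
  simp only [(hφ.differentiable one_ne_zero _).lineDeriv_eq_fderiv]

theorem setIntegral_fderiv_eq_zero_of_eq_zero_on_frontier [CompleteSpace F] (hΩ : IsBounded Ω)
    (hΩ' : μ (frontier Ω) = 0) {φ : E → F} (hφ : ContDiff ℝ 1 φ)
    (hφ₀ : ∀ x ∈ frontier Ω, φ x = 0) (v : E) : ∫ x in Ω, fderiv ℝ φ x v ∂μ = 0 := by
  have hint : IntegrableOn (fun x => fderiv ℝ φ x v) Ω μ :=
    integrableOn_of_continuous
      ((hφ.continuous_fderiv one_ne_zero).clm_apply continuous_const) hΩ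
  refine SeparatingDual.eq_zero_of_forall_dual_eq_zero (R := ℝ) fun L => ?_
  rw [← L.integral_comp_comm hint, ← setIntegral_fderiv_real_eq_zero_of_eq_zero_on_frontier hΩ hΩ'
    (L.contDiff.comp hφ) (fun x hx => by simp [hφ₀ x hx]) v]
  congr with x
  rw [fderiv_comp x L.differentiableAt (hφ.differentiable one_ne_zero x), L.fderiv,
    ContinuousLinearMap.comp_apply]

theorem setIntegral_bilin_fderiv_left_eq_neg [CompleteSpace H] (B : F →L[ℝ] G →L[ℝ] H)
    (hΩ : IsBounded Ω) (hΩ' : μ (frontier Ω) = 0) {f : E → F} {g : E → G} (hf : ContDiff ℝ 1 f)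
    (hg : ContDiff ℝ 1 g) (hfg : ∀ x ∈ frontier Ω, B (f x) (g x) = 0) (v : E) :
    ∫ x in Ω, B (fderiv ℝ f x v) (g x) ∂μ = -∫ x in Ω, B (f x) (fderiv ℝ g x v) ∂μ := by
  have : Continuous (fderiv ℝ f) := hf.continuous_fderiv one_ne_zero
  have : Continuous (fderiv ℝ g) := hg.continuous_fderiv one_ne_zero
  have hB : ContDiff ℝ 1 fun x => B (f x) (g x) := (B.contDiff.comp hf).clm_apply hg
  have hproduct : ∀ x, fderiv ℝ (fun x => B (f x) (g x)) x v =
      B (fderiv ℝ f x v) (g x) + B (f x) (fderiv ℝ g x v) := fun x => by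
    rw [B.fderiv_of_bilinear (hf.differentiable one_ne_zero x) (hg.differentiable one_ne_zero x)]
    simp [add_comm]
  rw [eq_neg_iff_add_eq_zero, ← integral_add
    (integrableOn_of_continuous (by fun_prop) hΩ) (integrableOn_of_continuous (by fun_prop) hΩ)]
  simpa only [hproduct] using setIntegral_fderiv_eq_zero_of_eq_zero_on_frontier hΩ hΩ' hB hfg v

end BoundedDomain

section Laplacian

variable {E F : Type*} [NormedAddCommGroup E] [InnerProductSpace ℝ E] [FiniteDimensional ℝ E]
  [NormedAddCommGroup F] [NormedSpace ℝ F]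

theorem laplacian_eq_sum_fderiv_fderiv {ι : Type*} [Fintype ι] (b : OrthonormalBasis ι ℝ E)
    (f : E → F) (x : E) : Δ f x = ∑ i, fderiv ℝ (fderiv ℝ f) x (b i) (b i) := by
  simp [laplacian_eq_iteratedFDeriv_orthonormalBasis f b, iteratedFDeriv_two_apply]

theorem contDiff_laplacian {f : E → F} {m n : WithTop ℕ∞} (hf : ContDiff ℝ n f)
    (hmn : m + 1 + 1 ≤ n) : ContDiff ℝ m (Δ f) := by
  have : ContDiff ℝ m (fderiv ℝ (fderiv ℝ f)) :=
    (hf.fderiv_right hmn).fderiv_right le_rfl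
  rw [funext (laplacian_eq_sum_fderiv_fderiv (stdOrthonormalBasis ℝ E) f)]
  fun_prop

end Laplacian

section Green

variable {E F G H : Type*} [NormedAddCommGroup E] [InnerProductSpace ℝ E] [FiniteDimensional ℝ E]
  [MeasurableSpace E] [BorelSpace E] {μ : Measure E} [μ.IsAddHaarMeasure]
  [NormedAddCommGroup F] [NormedSpace ℝ F] [NormedAddCommGroup G] [NormedSpace ℝ G]
  [NormedAddCommGroup H] [NormedSpace ℝ H] [CompleteSpace H] {Ω : Set E}

theorem setIntegral_bilin_fderiv_fderiv_comm (B : F →L[ℝ] G →L[ℝ] H) (hΩ : IsBounded Ω)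
    (hΩ' : μ (frontier Ω) = 0) {f : E → F} {g : E → G} (hf : ContDiff ℝ 2 f) (hg : ContDiff ℝ 2 g)
    (hf₀ : ∀ x ∈ frontier Ω, f x = 0) (hg₀ : ∀ x ∈ frontier Ω, g x = 0) (v : E) :
    ∫ x in Ω, B (fderiv ℝ (fderiv ℝ f) x v v) (g x) ∂μ =
      ∫ x in Ω, B (f x) (fderiv ℝ (fderiv ℝ g) x v v) ∂μ := by
  have hf₁ : ContDiff ℝ 1 (fderiv ℝ f) := hf.fderiv_right le_rfl
  have hg₁ : ContDiff ℝ 1 (fderiv ℝ g) := hg.fderiv_right le_rfl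
  have hf_second : ∀ x, fderiv ℝ (fderiv ℝ f) x v v = fderiv ℝ (fun y => fderiv ℝ f y v) x v :=
    fun x => by simp [fderiv_clm_apply (hf₁.differentiable one_ne_zero x)]
  have hg_second : ∀ x, fderiv ℝ (fderiv ℝ g) x v v = fderiv ℝ (fun y => fderiv ℝ g y v) x v :=
    fun x => by simp [fderiv_clm_apply (hg₁.differentiable one_ne_zero x)]
  calc ∫ x in Ω, B (fderiv ℝ (fderiv ℝ f) x v v) (g x) ∂μ
      = -∫ x in Ω, B (fderiv ℝ f x v) (fderiv ℝ g x v) ∂μ := by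
        simp only [hf_second]
        exact setIntegral_bilin_fderiv_left_eq_neg B hΩ hΩ' (hf₁.clm_apply contDiff_const)
          (hg.of_le one_le_two) (fun x hx => by simp [hg₀ x hx]) v
    _ = ∫ x in Ω, B (f x) (fderiv ℝ (fderiv ℝ g) x v v) ∂μ := by
        simp only [hg_second]
        rw [setIntegral_bilin_fderiv_left_eq_neg B hΩ hΩ' (hf.of_le one_le_two)
          (hg₁.clm_apply contDiff_const) (fun x hx => by simp [hf₀ x hx]) v, neg_neg]

theorem setIntegral_bilin_laplacian_comm (B : F →L[ℝ] G →L[ℝ] H) (hΩ : IsBounded Ω)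
    (hΩ' : μ (frontier Ω) = 0) {f : E → F} {g : E → G} (hf : ContDiff ℝ 2 f) (hg : ContDiff ℝ 2 g)
    (hf₀ : ∀ x ∈ frontier Ω, f x = 0) (hg₀ : ∀ x ∈ frontier Ω, g x = 0) :
    ∫ x in Ω, B (Δ f x) (g x) ∂μ = ∫ x in Ω, B (f x) (Δ g x) ∂μ := by
  have : Continuous (fderiv ℝ (fderiv ℝ f)) :=
    (hf.fderiv_right (m := 1) le_rfl).continuous_fderiv one_ne_zero
  have : Continuous (fderiv ℝ (fderiv ℝ g)) :=
    (hg.fderiv_right (m := 1) le_rfl).continuous_fderiv one_ne_zero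
  simp only [laplacian_eq_sum_fderiv_fderiv (stdOrthonormalBasis ℝ E), map_sum, sum_apply]
  rw [integral_finsetSum _ fun i _ => integrableOn_of_continuous (by fun_prop) hΩ,
    integral_finsetSum _ fun i _ => integrableOn_of_continuous (by fun_prop) hΩ]
  exact Finset.sum_congr rfl fun i _ =>
    setIntegral_bilin_fderiv_fderiv_comm B hΩ hΩ' hf hg hf₀ hg₀ _

end Green

section EnergyEstimate

theorem abs_im_mul_norm_le_of_im_inner_add_smul_eq_zero {H : Type*} [NormedAddCommGroup H]
    [InnerProductSpace ℂ H] {lam : ℂ} {u f : H} (h : (inner ℂ u (f + lam • u)).im = 0) :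
    |lam.im| * ‖u‖ ≤ ‖f‖ := by
  have hself : inner ℂ u u = ((‖u‖ ^ 2 : ℝ) : ℂ) := by
    rw [inner_self_eq_norm_sq_to_K]
    norm_cast
  have him : lam.im * ‖u‖ ^ 2 = -(inner ℂ u f).im := by
    rw [inner_add_right, inner_smul_right, hself, Complex.add_im, Complex.im_mul_ofReal] at h
    linarith
  have hquad : (|lam.im| * ‖u‖) * ‖u‖ ≤ ‖f‖ * ‖u‖ :=
    calc (|lam.im| * ‖u‖) * ‖u‖ = |lam.im * ‖u‖ ^ 2| := by
          rw [abs_mul, abs_of_nonneg (sq_nonneg ‖u‖)]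
          ring
      _ = |(inner ℂ u f).im| := by rw [him, abs_neg]
      _ ≤ ‖inner ℂ u f‖ := Complex.abs_im_le_norm _
      _ ≤ ‖f‖ * ‖u‖ := (norm_inner_le_norm u f).trans_eq (mul_comm _ _)
  rcases (norm_nonneg u).eq_or_lt with hu | hu
  · simp [← hu]
  · exact le_of_mul_le_mul_right hquad hu

section L2

variable {X F : Type*} [MeasurableSpace X] {μ : Measure X} [NormedAddCommGroup F]
  {f g : X → F}

theorem norm_toLp_two_eq_sqrt_integral (hf : MemLp f 2 μ) :
    ‖hf.toLp f‖ = √(∫ x, ‖f x‖ ^ 2 ∂μ) := by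
  rw [Lp.norm_toLp, hf.eLpNorm_eq_integral_rpow_norm two_ne_zero ENNReal.ofNat_ne_top,
    ENNReal.toReal_ofReal (by positivity), Real.sqrt_eq_rpow]
  simp

variable (𝕜 : Type*) [RCLike 𝕜] [InnerProductSpace 𝕜 F]

theorem integrable_inner_of_memLp_two (hf : MemLp f 2 μ) (hg : MemLp g 2 μ) :
    Integrable (fun x => inner 𝕜 (f x) (g x)) μ :=
  (hf.norm.integrable_mul hg.norm).mono' (hf.aestronglyMeasurable.inner hg.aestronglyMeasurable)
    (.of_forall fun _ => norm_inner_le_norm _ _)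

theorem inner_toLp_eq_integral (hf : MemLp f 2 μ) (hg : MemLp g 2 μ) :
    inner 𝕜 (hf.toLp f) (hg.toLp g) = ∫ x, inner 𝕜 (f x) (g x) ∂μ := by
  rw [L2.inner_def]
  refine integral_congr_ae ?_
  filter_upwards [hf.coeFn_toLp, hg.coeFn_toLp] with x hfx hgx
  rw [hfx, hgx]

end L2

variable {E F : Type*} [NormedAddCommGroup E] [InnerProductSpace ℝ E] [FiniteDimensional ℝ E]
  [MeasurableSpace E] [BorelSpace E] {μ : Measure E} [μ.IsAddHaarMeasure]
  [NormedAddCommGroup F] [InnerProductSpace ℂ F] {Ω : Set E}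

theorem im_setIntegral_inner_bilaplacian_eq_zero (hΩ : IsBounded Ω) (hΩ' : μ (frontier Ω) = 0)
    {u : E → F} (hu : ContDiff ℝ 4 u) (hu₀ : ∀ x ∈ frontier Ω, u x = 0)
    (hΔu₀ : ∀ x ∈ frontier Ω, Δ u x = 0) :
    (∫ x in Ω, inner ℂ (u x) (Δ (Δ u) x) ∂μ).im = 0 := by
  let B : F →L[ℝ] F →L[ℝ] ℂ :=
    (isBoundedBilinearMap_inner (𝕜 := ℂ) (E := F)).toContinuousLinearMap
  have hsymm : ∫ x in Ω, inner ℂ (Δ u x) (Δ u x) ∂μ = ∫ x in Ω, inner ℂ (u x) (Δ (Δ u) x) ∂μ :=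
    setIntegral_bilin_laplacian_comm B hΩ hΩ' (hu.of_le (by norm_num))
      (contDiff_laplacian hu (by norm_num)) hu₀ hΔu₀
  simp only [← hsymm, inner_self_eq_norm_sq_to_K]
  norm_cast

theorem im_setIntegral_inner_add_smul_eq_zero_of_navier (hΩ : IsBounded Ω)
    (hΩ' : μ (frontier Ω) = 0) {V : E → ℝ} {lam : ℂ} {f u : E → F} (hf : MemLp f 2 (μ.restrict Ω))
    (hu : ContDiff ℝ 4 u) (heq : ∀ x ∈ Ω, Δ (Δ u) x + V x • u x - lam • u x = f x)
    (hu₀ : ∀ x ∈ frontier Ω, u x = 0) (hΔu₀ : ∀ x ∈ frontier Ω, Δ u x = 0) :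
    (∫ x in Ω, inner ℂ (u x) (f x + lam • u x) ∂μ).im = 0 := by
  have hΔΔu : Continuous (Δ (Δ u)) :=
    (contDiff_laplacian (m := 0) (contDiff_laplacian (m := 2) hu (by norm_num))
      (by norm_num)).continuous
  have hu_memLp : MemLp u 2 (μ.restrict Ω) := memLp_restrict_of_continuous hu.continuous hΩ 2
  have hint : IntegrableOn (fun x => inner ℂ (u x) (f x + lam • u x)) Ω μ :=
    integrable_inner_of_memLp_two ℂ hu_memLp (hf.add (hu_memLp.const_smul lam))
  have hint' : IntegrableOn (fun x => inner ℂ (u x) (Δ (Δ u) x)) Ω μ :=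
    integrableOn_of_continuous (hu.continuous.inner hΔΔu) hΩ
  have him : ∀ x ∈ Ω, (inner ℂ (u x) (f x + lam • u x)).im = (inner ℂ (u x) (Δ (Δ u) x)).im := by
    intro x hx
    rw [← heq x hx, sub_add_cancel, inner_add_right, inner_smul_right_eq_smul,
      Complex.add_im, Complex.smul_im, ← RCLike.im_eq_complex_im, inner_self_im, smul_zero,
      add_zero]
  calc (∫ x in Ω, inner ℂ (u x) (f x + lam • u x) ∂μ).im
      = ∫ x in Ω, (inner ℂ (u x) (f x + lam • u x)).im ∂μ := (integral_im hint).symm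
    _ = ∫ x in Ω, (inner ℂ (u x) (Δ (Δ u) x)).im ∂μ :=
        setIntegral_congr_fun₀ (nullMeasurableSet_of_null_frontier hΩ') him
    _ = (∫ x in Ω, inner ℂ (u x) (Δ (Δ u) x) ∂μ).im := integral_im hint'
    _ = 0 := im_setIntegral_inner_bilaplacian_eq_zero hΩ hΩ' hu hu₀ hΔu₀

theorem sqrt_setIntegral_norm_sq_le_of_navier (hΩ : IsBounded Ω) (hΩ' : μ (frontier Ω) = 0)
    {V : E → ℝ} {lam : ℂ} (hlam : lam.im ≠ 0) {f u : E → F} (hf : MemLp f 2 (μ.restrict Ω))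
    (hu : ContDiff ℝ 4 u) (heq : ∀ x ∈ Ω, Δ (Δ u) x + V x • u x - lam • u x = f x)
    (hu₀ : ∀ x ∈ frontier Ω, u x = 0) (hΔu₀ : ∀ x ∈ frontier Ω, Δ u x = 0) :
    √(∫ x in Ω, ‖u x‖ ^ 2 ∂μ) ≤ 1 / |lam.im| * √(∫ x in Ω, ‖f x‖ ^ 2 ∂μ) := by
  have hu_memLp : MemLp u 2 (μ.restrict Ω) := memLp_restrict_of_continuous hu.continuous hΩ 2
  have horth : (inner ℂ (hu_memLp.toLp u) (hf.toLp f + lam • hu_memLp.toLp u)).im = 0 := by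
    rw [← MemLp.toLp_const_smul, ← MemLp.toLp_add, inner_toLp_eq_integral]
    exact im_setIntegral_inner_add_smul_eq_zero_of_navier hΩ hΩ' hf hu heq hu₀ hΔu₀
  rw [← norm_toLp_two_eq_sqrt_integral hu_memLp, ← norm_toLp_two_eq_sqrt_integral hf,
    one_div_mul_eq_div, le_div_iff₀' (abs_pos.2 hlam)]
  exact abs_im_mul_norm_le_of_im_inner_add_smul_eq_zero horth

theorem stmt11_general (hΩ : IsBounded Ω) (hΩ' : μ (frontier Ω) = 0)
    {V : E → ℝ} {lam : ℂ} (hlam : lam.im ≠ 0) {f u w : E → F} (hf : MemLp f 2 (μ.restrict Ω))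
    (hu : ContDiff ℝ 4 u) (hw : ContDiff ℝ 4 w)
    (hequ : ∀ x ∈ Ω, Δ (Δ u) x + V x • u x - lam • u x = f x)
    (heqw : ∀ x ∈ Ω, Δ (Δ w) x + V x • w x - lam • w x = u x)
    (hu₀ : ∀ x ∈ frontier Ω, u x = 0) (hΔu₀ : ∀ x ∈ frontier Ω, Δ u x = 0)
    (hw₀ : ∀ x ∈ frontier Ω, w x = 0) (hΔw₀ : ∀ x ∈ frontier Ω, Δ w x = 0) :
    √(∫ x in Ω, ‖w x‖ ^ 2 ∂μ) ≤ 1 / |lam.im| ^ 2 * √(∫ x in Ω, ‖f x‖ ^ 2 ∂μ) :=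
  calc √(∫ x in Ω, ‖w x‖ ^ 2 ∂μ)
      ≤ 1 / |lam.im| * √(∫ x in Ω, ‖u x‖ ^ 2 ∂μ) :=
        sqrt_setIntegral_norm_sq_le_of_navier hΩ hΩ' hlam
          (memLp_restrict_of_continuous hu.continuous hΩ 2) hw heqw hw₀ hΔw₀
    _ ≤ 1 / |lam.im| * (1 / |lam.im| * √(∫ x in Ω, ‖f x‖ ^ 2 ∂μ)) := by
        gcongr
        exact sqrt_setIntegral_norm_sq_le_of_navier hΩ hΩ' hlam hf hu hequ hu₀ hΔu₀
    _ = 1 / |lam.im| ^ 2 * √(∫ x in Ω, ‖f x‖ ^ 2 ∂μ) := by ring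

end EnergyEstimate

theorem lapC_eq_laplacian {n : ℕ} (f : EuclideanSpace ℝ (Fin n) → ℂ) : lapC n f = Δ f := by
  ext x
  simp [lapC, laplacian_eq_sum_fderiv_fderiv (EuclideanSpace.basisFun (Fin n) ℝ)]

/-- Chained L² estimate for the λ-derivative of solutions of the Navier problem for
`Δ² + V`: if `Δ²u + Vu − λu = f` and `Δ²w + Vw − λw = u` in `B_R` with
`u = Δu = w = Δw = 0` on `∂B_R`, then `‖w‖_{L²(B_R)} ≤ |Im λ|⁻² ‖f‖_{L²(B_R)}`. -/
theorem stmt11 (n : ℕ) (hn : 1 ≤ n) (R : ℝ) (hR : 0 < R)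
    (V : EuclideanSpace ℝ (Fin n) → ℝ) (hVmeas : Measurable V)
    (hVbdd : ∃ M : ℝ, ∀ x, |V x| ≤ M)
    (lam : ℂ) (hlam : lam.im ≠ 0)
    (f : EuclideanSpace ℝ (Fin n) → ℂ) (hf : Continuous f)
    (u w : EuclideanSpace ℝ (Fin n) → ℂ) (hu : ContDiff ℝ (⊤ : ℕ∞) u) (hw : ContDiff ℝ (⊤ : ℕ∞) w)
    (hequ : ∀ x ∈ closedBall (0 : EuclideanSpace ℝ (Fin n)) R,
      lapC n (lapC n u) x + (V x : ℂ) * u x - lam * u x = f x)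
    (heqw : ∀ x ∈ closedBall (0 : EuclideanSpace ℝ (Fin n)) R,
      lapC n (lapC n w) x + (V x : ℂ) * w x - lam * w x = u x)
    (hub : ∀ x ∈ sphere (0 : EuclideanSpace ℝ (Fin n)) R, u x = 0)
    (hlapub : ∀ x ∈ sphere (0 : EuclideanSpace ℝ (Fin n)) R, lapC n u x = 0)
    (hwb : ∀ x ∈ sphere (0 : EuclideanSpace ℝ (Fin n)) R, w x = 0)
    (hlapwb : ∀ x ∈ sphere (0 : EuclideanSpace ℝ (Fin n)) R, lapC n w x = 0) :
    Real.sqrt (∫ x in ball (0 : EuclideanSpace ℝ (Fin n)) R, ‖w x‖ ^ 2)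
      ≤ (1 / |lam.im| ^ 2)
        * Real.sqrt (∫ x in ball (0 : EuclideanSpace ℝ (Fin n)) R, ‖f x‖ ^ 2) := by
  simp only [lapC_eq_laplacian, ← frontier_ball (0 : EuclideanSpace ℝ (Fin n)) hR.ne'] at *
  exact stmt11_general isBounded_ball
    (frontier_ball (0 : EuclideanSpace ℝ (Fin n)) hR.ne' ▸
      Measure.addHaar_sphere_of_ne_zero volume 0 hR.ne') hlam
    (memLp_restrict_of_continuous hf isBounded_ball 2)
    (contDiff_infty.1 hu 4) (contDiff_infty.1 hw 4)
    (fun x hx => hequ x (ball_subset_closedBall hx))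
    (fun x hx => heqw x (ball_subset_closedBall hx)) hub hlapub hwb hlapwb
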